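/- Suppose F : X → ℝ is L_W-smooth, the FLT iterates satisfy W^t − W^{t−1} = −η Ā ∇F(W^{t−1}) for all 1 ≤ t ≤ T with step size η > 0, and the per-step gradient-deviation bound ‖(I_M − Ā)·∇F(W^{t−1})‖ ≤ L_W · a · ‖W^t − W^{t−1}‖ holds for all 1 ≤ t ≤ T, where a is the operator norm of the linear map V ↦ (I_M − Ā)V on X. Then (1/(2η) − L_W/2 − (η/2)·L_W²·a²) · Σ_{t=1}^{T} ‖W^t − W^{t−1}‖² ≤ F(W^0) − F(W^T). In particular, if c := 1/(2η) − L_W/2 − (η/2)·L_W²·a² > 0, then (1/(T·M)) Σ_{t=1}^{T} ‖W^t − W^{t−1}‖² ≤ (F(W^0) − F(W^T)) / (T · M · c). (Theorem 2 of the paper: convergence of the optimality gap G(W^t) := ‖W^t − W^{t−1}‖² for FLT.) -/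

import Mathlib

open scoped RealInnerProductSpace

/-- Left multiplication by an `M × M` matrix `A` on the space of `M × d` real matrices,
realized as the Euclidean space `EuclideanSpace ℝ (Fin M × Fin d)` (with the Frobenius
inner product), via the Kronecker product `A ⊗ I_d`. -/
noncomputable def matLeftMul (M d : ℕ) (A : Matrix (Fin M) (Fin M) ℝ) :
    EuclideanSpace ℝ (Fin M × Fin d) →L[ℝ] EuclideanSpace ℝ (Fin M × Fin d) :=
  LinearMap.toContinuousLinearMap
    (Matrix.toEuclideanLin (Matrix.kroneckerMap (· * ·) A (1 : Matrix (Fin d) (Fin d) ℝ)))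

/-!
For any vectors, `2⟪g, p⟫ ≥ ‖p‖² - ‖g - p‖²`. Hence a step `-η p` along a direction `p` whose
deviation from the gradient `g` is at most `κ` times the step length has
`⟪g, -η p⟫ ≤ -(1 / (2η) - ηκ² / 2) ‖η p‖²`, and the quadratic upper bound for functions with
`L`-Lipschitz gradient loses at most a further `(L / 2) ‖η p‖²`. Summing the resulting decrease
telescopes. FLT is the case `g = ∇F(W)`, `p = Ā ∇F(W)`, where `g - p = (I - Ā) ∇F(W)`.
-/

section MatLeftMul

variable {M d : ℕ}

lemma matLeftMul_one : matLeftMul M d 1 = 1 := by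
  rw [matLeftMul, Matrix.one_kronecker_one]
  ext v
  simp

lemma matLeftMul_add (A B : Matrix (Fin M) (Fin M) ℝ) :
    matLeftMul M d (A + B) = matLeftMul M d A + matLeftMul M d B := by
  simp only [matLeftMul, Matrix.add_kronecker, map_add]

lemma matLeftMul_one_sub (A : Matrix (Fin M) (Fin M) ℝ) :
    matLeftMul M d (1 - A) = 1 - matLeftMul M d A :=
  eq_sub_of_add_eq <| by rw [← matLeftMul_add, sub_add_cancel, matLeftMul_one]

end MatLeftMul

lemma sum_Icc_one_le_sub_of_le_sub {α : Type*} [AddCommGroup α] [PartialOrder α]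
    [IsOrderedAddMonoid α] {f u : ℕ → α} {T : ℕ}
    (hf : ∀ t, 1 ≤ t → t ≤ T → f t ≤ u (t - 1) - u t) :
    ∑ t ∈ Finset.Icc 1 T, f t ≤ u 0 - u T :=
  calc
    ∑ t ∈ Finset.Icc 1 T, f t = ∑ t ∈ Finset.range T, f (t + 1) := by
      rw [Finset.range_eq_Ico, Finset.sum_Ico_add' f, zero_add, Finset.Ico_add_one_right_eq_Icc]
    _ ≤ ∑ t ∈ Finset.range T, (u t - u (t + 1)) :=
      Finset.sum_le_sum fun t ht => hf (t + 1) (Nat.le_add_left 1 t) (Finset.mem_range.mp ht)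
    _ = u 0 - u T := Finset.sum_range_sub' u T

section InnerProductSpace

variable {E : Type*} [NormedAddCommGroup E] [InnerProductSpace ℝ E] {g : E → E} {L η κ : ℝ}

lemma norm_sq_sub_norm_sub_sq_le_two_mul_inner (g p : E) :
    ‖p‖ ^ 2 - ‖g - p‖ ^ 2 ≤ 2 * ⟪g, p⟫ := by
  rw [norm_sub_sq_real]
  linarith [sq_nonneg ‖g‖]

lemma inner_neg_smul_le_of_norm_sub_le {g p : E} (hη : 0 < η)
    (hp : ‖g - p‖ ≤ κ * ‖-(η • p)‖) :
    ⟪g, -(η • p)⟫ ≤ -(1 / (2 * η) - η / 2 * κ ^ 2) * ‖-(η • p)‖ ^ 2 := by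
  have hdev : ‖g - p‖ ^ 2 ≤ (κ * ‖-(η • p)‖) ^ 2 := by gcongr
  have hnorm : ‖-(η • p)‖ ^ 2 = η ^ 2 * ‖p‖ ^ 2 := by
    rw [norm_neg, norm_smul, mul_pow, Real.norm_eq_abs, sq_abs]
  calc
    ⟪g, -(η • p)⟫ = -(η / 2) * (2 * ⟪g, p⟫) := by
      rw [inner_neg_right, real_inner_smul_right]
      ring
    _ ≤ -(η / 2) * (‖p‖ ^ 2 - ‖g - p‖ ^ 2) :=
      mul_le_mul_of_nonpos_left (norm_sq_sub_norm_sub_sq_le_two_mul_inner g p) (by linarith)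
    _ ≤ -(η / 2) * (‖p‖ ^ 2 - (κ * ‖-(η • p)‖) ^ 2) :=
      mul_le_mul_of_nonpos_left (by linarith) (by linarith)
    _ = -(1 / (2 * η) - η / 2 * κ ^ 2) * ‖-(η • p)‖ ^ 2 := by
      rw [mul_pow, hnorm]
      field_simp

lemma inner_lineMap_le_of_norm_sub_le {x y : E} {r : ℝ} (hr : 0 ≤ r)
    (hL : ‖g (AffineMap.lineMap x y r) - g x‖ ≤ L * ‖AffineMap.lineMap x y r - x‖) :
    ⟪g (AffineMap.lineMap x y r), y - x⟫ ≤ ⟪g x, y - x⟫ + r * (L * ‖y - x‖ ^ 2) := by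
  set z : E := AffineMap.lineMap x y r
  have hdist : ‖z - x‖ = r * ‖y - x‖ := by
    rw [← dist_eq_norm, dist_lineMap_left, Real.norm_of_nonneg hr, dist_eq_norm_sub']
  calc
    ⟪g z, y - x⟫ = ⟪g x, y - x⟫ + ⟪g z - g x, y - x⟫ := by
      rw [inner_sub_left, add_sub_cancel]
    _ ≤ ⟪g x, y - x⟫ + ‖g z - g x‖ * ‖y - x‖ := by
      gcongr
      exact real_inner_le_norm _ _
    _ ≤ ⟪g x, y - x⟫ + L * ‖z - x‖ * ‖y - x‖ := by gcongr
    _ = ⟪g x, y - x⟫ + r * (L * ‖y - x‖ ^ 2) := by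
      rw [hdist]
      ring

variable [CompleteSpace E] {F : E → ℝ}

lemma hasDerivAt_comp_lineMap_of_hasGradientAt {x y g' : E} {r : ℝ}
    (hF : HasGradientAt F g' (AffineMap.lineMap x y r)) :
    HasDerivAt (fun r : ℝ => F (AffineMap.lineMap x y r)) ⟪g', y - x⟫ r :=
  (hF.hasFDerivAt.comp_hasDerivAt r AffineMap.hasDerivAt_lineMap).congr_deriv (by simp)

lemma le_add_inner_add_sq_of_norm_gradient_sub_le {x y : E}
    (hF : ∀ z ∈ segment ℝ x y, HasGradientAt F (g z) z)
    (hL : ∀ z ∈ segment ℝ x y, ‖g z - g x‖ ≤ L * ‖z - x‖) :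
    F y ≤ F x + ⟪g x, y - x⟫ + L / 2 * ‖y - x‖ ^ 2 := by
  let γ : ℝ → E := AffineMap.lineMap x y
  let B : ℝ → ℝ := fun r => F x + r * ⟪g x, y - x⟫ + r ^ 2 * (L / 2 * ‖y - x‖ ^ 2)
  let B' : ℝ → ℝ := fun r => ⟪g x, y - x⟫ + r * (L * ‖y - x‖ ^ 2)
  have hγ : ∀ r ∈ Set.Icc (0 : ℝ) 1, γ r ∈ segment ℝ x y := fun r =>
    lineMap_mem_segment ℝ x y
  have hFγ : ∀ r ∈ Set.Icc (0 : ℝ) 1, HasDerivAt (fun r => F (γ r)) ⟪g (γ r), y - x⟫ r :=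
    fun r hr => hasDerivAt_comp_lineMap_of_hasGradientAt (hF _ (hγ r hr))
  have hB : ∀ r, HasDerivAt B (B' r) r := fun r =>
    ((((hasDerivAt_id r).mul_const _).const_add _).add
      ((hasDerivAt_pow 2 r).mul_const _)).congr_deriv (by
        simp only [B', one_mul, Nat.cast_ofNat, Nat.add_one_sub_one, pow_one]
        ring)
  have hle : F (γ 1) ≤ B 1 :=
    image_le_of_deriv_right_le_deriv_boundary
      (fun r hr => (hFγ r hr).continuousAt.continuousWithinAt)
      (fun r hr => (hFγ r (Set.Ico_subset_Icc_self hr)).hasDerivWithinAt)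
      (by simp [γ, B])
      (fun r _ => (hB r).continuousAt.continuousWithinAt)
      (fun r _ => (hB r).hasDerivWithinAt)
      (fun r hr =>
        inner_lineMap_le_of_norm_sub_le hr.1 (hL _ (hγ r (Set.Ico_subset_Icc_self hr))))
      (Set.right_mem_Icc.mpr zero_le_one)
  simpa [γ, B] using hle

lemma mul_norm_sub_sq_le_sub_of_inexact_gradient_step {x y p : E} (hη : 0 < η)
    (hF : ∀ z ∈ segment ℝ x y, HasGradientAt F (g z) z)
    (hL : ∀ z ∈ segment ℝ x y, ‖g z - g x‖ ≤ L * ‖z - x‖)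
    (hstep : y - x = -(η • p)) (hdev : ‖g x - p‖ ≤ κ * ‖y - x‖) :
    (1 / (2 * η) - L / 2 - η / 2 * κ ^ 2) * ‖y - x‖ ^ 2 ≤ F x - F y := by
  have hquad := le_add_inner_add_sq_of_norm_gradient_sub_le hF hL
  have hinner := inner_neg_smul_le_of_norm_sub_le hη (hstep ▸ hdev)
  rw [← hstep] at hinner
  linarith

theorem flt_theorem2_general {s : Set E} (hs : Convex ℝ s)
    (hF : ∀ z ∈ s, HasGradientAt F (g z) z)
    (hL : ∀ x ∈ s, ∀ y ∈ s, ‖g x - g y‖ ≤ L * ‖x - y‖) (hη : 0 < η)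
    {T : ℕ} {W p : ℕ → E} (hW : ∀ t ≤ T, W t ∈ s)
    (hstep : ∀ t, 1 ≤ t → t ≤ T → W t - W (t - 1) = -(η • p t))
    (hdev : ∀ t, 1 ≤ t → t ≤ T → ‖g (W (t - 1)) - p t‖ ≤ κ * ‖W t - W (t - 1)‖)
    {c : ℝ} (hc : c = 1 / (2 * η) - L / 2 - η / 2 * κ ^ 2) {N : ℝ} (hN : 0 < N) :
    c * ∑ t ∈ Finset.Icc 1 T, ‖W t - W (t - 1)‖ ^ 2 ≤ F (W 0) - F (W T) ∧
      (0 < c → 1 / N * ∑ t ∈ Finset.Icc 1 T, ‖W t - W (t - 1)‖ ^ 2 ≤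
        (F (W 0) - F (W T)) / (N * c)) := by
  have hdecrease : ∀ t, 1 ≤ t → t ≤ T →
      c * ‖W t - W (t - 1)‖ ^ 2 ≤ F (W (t - 1)) - F (W t) := by
    intro t ht htT
    have hprev : W (t - 1) ∈ s := hW _ ((Nat.sub_le t 1).trans htT)
    have hseg : segment ℝ (W (t - 1)) (W t) ⊆ s := hs.segment_subset hprev (hW t htT)
    rw [hc]
    exact mul_norm_sub_sq_le_sub_of_inexact_gradient_step hη (fun z hz => hF z (hseg hz))
      (fun z hz => hL z (hseg hz) _ hprev) (hstep t ht htT) (hdev t ht htT)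
  have hsum : c * ∑ t ∈ Finset.Icc 1 T, ‖W t - W (t - 1)‖ ^ 2 ≤ F (W 0) - F (W T) := by
    rw [Finset.mul_sum]
    exact sum_Icc_one_le_sub_of_le_sub (u := fun t => F (W t)) hdecrease
  refine ⟨hsum, fun hcpos => ?_⟩
  rw [one_div_mul_eq_div, mul_comm N c, ← div_div]
  gcongr
  rwa [le_div_iff₀' hcpos]

end InnerProductSpace

/-- Theorem 2 of the paper: convergence of the optimality gap
`G(W^t) = ‖W^t − W^{t−1}‖²` for FLT. -/
theorem flt_theorem2 (M d T : ℕ) (hM : 1 ≤ M) (hd : 1 ≤ d) (hT : 1 ≤ T)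
    (Abar : Matrix (Fin M) (Fin M) ℝ)
    (F : EuclideanSpace ℝ (Fin M × Fin d) → ℝ)
    (gradF : EuclideanSpace ℝ (Fin M × Fin d) → EuclideanSpace ℝ (Fin M × Fin d))
    (hF : ∀ V, HasGradientAt F (gradF V) V)
    (LW : ℝ)
    (hsmooth : ∀ U V : EuclideanSpace ℝ (Fin M × Fin d),
      ‖gradF U - gradF V‖ ≤ LW * ‖U - V‖)
    (η : ℝ) (hη : 0 < η)
    (W : ℕ → EuclideanSpace ℝ (Fin M × Fin d))
    (hupd : ∀ t : ℕ, 1 ≤ t → t ≤ T →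
      W t - W (t - 1) = -(η • matLeftMul M d Abar (gradF (W (t - 1)))))
    (a : ℝ) (ha : a = ‖matLeftMul M d ((1 : Matrix (Fin M) (Fin M) ℝ) - Abar)‖)
    (hdev : ∀ t : ℕ, 1 ≤ t → t ≤ T →
      ‖matLeftMul M d ((1 : Matrix (Fin M) (Fin M) ℝ) - Abar) (gradF (W (t - 1)))‖ ≤
        LW * a * ‖W t - W (t - 1)‖)
    (c : ℝ) (hc : c = 1 / (2 * η) - LW / 2 - (η / 2) * LW ^ 2 * a ^ 2) :
    c * (∑ t ∈ Finset.Icc 1 T, ‖W t - W (t - 1)‖ ^ 2) ≤ F (W 0) - F (W T) ∧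
      (0 < c →
        (1 / ((T : ℝ) * (M : ℝ))) * (∑ t ∈ Finset.Icc 1 T, ‖W t - W (t - 1)‖ ^ 2) ≤
          (F (W 0) - F (W T)) / ((T : ℝ) * (M : ℝ) * c)) := by
  exact flt_theorem2_general (s := Set.univ) (κ := LW * a) convex_univ (fun V _ => hF V)
    (fun U _ V _ => hsmooth U V) hη (fun t _ => Set.mem_univ (W t)) hupd
    (fun t ht htT => by simpa [matLeftMul_one_sub] using hdev t ht htT)
    (by rw [hc]; ring) (by positivity)
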